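/- Let a, b be coprime positive integers. Then the lower Christoffel word w_{a,b} is a Lyndon word, and every Lyndon word u with Parikh vector (a,b) satisfies u ≤ w_{a,b} in the lexicographic order induced by 0 < 1. -/

import Mathlib

/-- The lower Christoffel word `w_{a,b}`: the binary word of length `a+b` whose
`k`-th letter (1-based) is `⌊kb/(a+b)⌋ - ⌊(k-1)b/(a+b)⌋` (with `false = 0`, `true = 1`). -/
def lowerChristoffel (a b : ℕ) : List Bool :=
  (List.range (a + b)).map fun i => decide ((i + 1) * b / (a + b) ≠ i * b / (a + b))

/-- The upper Christoffel word `W_{a,b}`: the binary word of length `a+b` whose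
`k`-th letter is `⌈kb/(a+b)⌉ - ⌈(k-1)b/(a+b)⌉`. -/
def upperChristoffel (a b : ℕ) : List Bool :=
  (List.range (a + b)).map fun i =>
    decide (((i + 1) * b + (a + b) - 1) / (a + b) ≠ (i * b + (a + b) - 1) / (a + b))

/-- `p` is a period of `w`: `p` is positive and `w_i = w_{i+p}` for all valid indices. -/
def HasPeriod (w : List Bool) (p : ℕ) : Prop :=
  0 < p ∧ ∀ i, i + p < w.length → w.getD i false = w.getD (i + p) false

/-- A central word: a binary word with two coprime periods `p`, `q` and length `p + q - 2`. -/
def IsCentral (w : List Bool) : Prop :=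
  ∃ p q : ℕ, Nat.Coprime p q ∧ HasPeriod w p ∧ HasPeriod w q ∧ w.length + 2 = p + q

/-- A binary word is balanced if any two factors of the same length have numbers of `1`s
differing by at most `1`. -/
def BalancedWord (w : List Bool) : Prop :=
  ∀ u v : List Bool, u <:+: w → v <:+: w → u.length = v.length →
    |(u.count true : ℤ) - (v.count true : ℤ)| ≤ 1

/-- `w^m`: the `m`-th power of the word `w`. -/
def wpow (w : List Bool) (m : ℕ) : List Bool := (List.replicate m w).flatten

/-- A word is primitive if it is not a proper power. -/
def IsPrimitiveWord (w : List Bool) : Prop := ¬ ∃ (v : List Bool) (m : ℕ), 2 ≤ m ∧ w = wpow v m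

/-- A Lyndon word: a nonempty primitive word lexicographically strictly smaller than all
of its proper nonempty suffixes (for the order `0 < 1`, i.e. `false < true`). -/
def IsLyndonWord (w : List Bool) : Prop :=
  w ≠ [] ∧ IsPrimitiveWord w ∧
    ∀ u v : List Bool, w = u ++ v → u ≠ [] → v ≠ [] → List.Lex (· < ·) w v

/-- `p` is the minimal period of `w`. -/
def IsMinPeriod (w : List Bool) (p : ℕ) : Prop :=
  HasPeriod w p ∧ ∀ q : ℕ, HasPeriod w q → p ≤ q

/-- `u` is a factor of the infinite periodic word `w^ω`. -/
def IsOmegaFactor (u w : List Bool) : Prop := ∃ m : ℕ, u <:+: wpow w m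

/-- A primitive Christoffel word: a lower or upper Christoffel word `w_{a,b}` with
`gcd(a,b) = 1`. -/
def IsPrimitiveChristoffel (c : List Bool) : Prop :=
  ∃ a b : ℕ, Nat.Coprime a b ∧ (c = lowerChristoffel a b ∨ c = upperChristoffel a b)

/-!
Read a binary word as a lattice path, `0` a horizontal and `1` a vertical unit step, and measure the
height of its endpoint relative to the line of slope `b / a`. The path of `w_{a,b}` is the highest
one staying weakly below that line: its prefixes have height at most `0`, but turning the last
letter of a prefix `q0` into `1` makes the height positive.

Write `w_{a,b} = xv` with `x` and `v` nonempty. By coprimality `x` has negative height, so `v` has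
positive height and is not a prefix of `w_{a,b}`. If `v < w_{a,b}`, then `v` starts with some `q0`
and `w_{a,b}` with `q1`; now `q1` and `x` have height at most `0`, whereas `xq1` has positive height
because `xq0` is a prefix of `w_{a,b}`. Heights being additive, this is absurd.

If a Lyndon word `u` with Parikh vector `(a, b)` were greater than `w_{a,b}`, so would be all its
nonempty suffixes. Each of them would start with a nonempty word `q1` of positive height, so `u`
would be a product of such words and have positive height. But its height is `ab - ba = 0`.
-/

theorem succ_mul_div_eq_or (r : ℕ) {b n : ℕ} (hbn : b ≤ n) :
    (r + 1) * b / n = r * b / n ∨ (r + 1) * b / n = r * b / n + 1 := by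
  rcases n.eq_zero_or_pos with rfl | hn
  · simp
  have hlower : r * b / n ≤ (r + 1) * b / n := Nat.div_le_div_right (by lia)
  have hupper : (r + 1) * b / n ≤ r * b / n + 1 := by
    rw [← Nat.add_div_right _ hn]
    exact Nat.div_le_div_right (by lia)
  omega

theorem prefix_or_exists_rel_of_lex {α : Type*} {r : α → α → Prop} {x y : List α}
    (h : List.Lex r x y) :
    x <+: y ∨ ∃ q c d, r c d ∧ q ++ [c] <+: x ∧ q ++ [d] <+: y := by
  induction h with
  | nil => exact .inl List.nil_prefix
  | @cons e _ _ _ ih =>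
    rcases ih with hpre | ⟨q, c, d, hcd, hx, hy⟩
    · exact .inl (List.cons_prefix_cons.2 ⟨rfl, hpre⟩)
    · exact .inr ⟨e :: q, c, d, hcd, List.cons_prefix_cons.2 ⟨rfl, hx⟩,
        List.cons_prefix_cons.2 ⟨rfl, hy⟩⟩
  | @rel c _ d _ hcd => exact .inr ⟨[], c, d, hcd, by simp, by simp⟩

theorem count_wpow (v : List Bool) (m : ℕ) (c : Bool) : (wpow v m).count c = m * v.count c := by
  simp [wpow, List.count_flatten]

theorem isPrimitiveWord_of_coprime_count {w : List Bool}
    (hw : Nat.Coprime (w.count false) (w.count true)) : IsPrimitiveWord w := by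
  rintro ⟨v, m, hm, rfl⟩
  have hdvd : ∀ c, m ∣ (wpow v m).count c := fun c => ⟨_, count_wpow v m c⟩
  have : m = 1 := Nat.eq_one_of_dvd_coprimes hw (hdvd false) (hdvd true)
  omega

theorem IsLyndonWord.le_of_suffix {u v : List Bool} (hu : IsLyndonWord u) (hvu : v <:+ u)
    (hv : v ≠ []) : u ≤ v := by
  obtain ⟨x, hx⟩ := hvu
  rcases eq_or_ne x [] with rfl | hx_ne
  · exact hx.ge
  · exact le_of_lt (hu.2.2 x v hx.symm hx_ne hv)

/-- The height of the endpoint of the lattice path coded by `w` (`0` a unit step to the right, `1` a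
unit step up) above the line through the origin and `(a, b)`, scaled by `a` to be an integer. -/
def height (a b : ℕ) (w : List Bool) : ℤ := a * w.count true - b * w.count false

section Height

variable {a b : ℕ} {w : List Bool}

theorem height_append (a b : ℕ) (x y : List Bool) :
    height a b (x ++ y) = height a b x + height a b y := by
  simp only [height, List.count_append]
  push_cast
  ring

theorem height_concat_true (a b : ℕ) (w : List Bool) :
    height a b (w ++ [true]) = height a b (w ++ [false]) + (a + b) := by
  have htrue : height a b [true] = a := by simp [height]
  have hfalse : height a b [false] = -b := by simp [height]
  rw [height_append, height_append, htrue, hfalse]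
  ring

theorem height_eq_mul_count_sub_mul_length (a b : ℕ) (w : List Bool) :
    height a b w = (a + b : ℕ) * w.count true - b * w.length := by
  rw [height, ← List.count_false_add_count_true w]
  push_cast
  ring

theorem add_dvd_length_of_height_eq_zero (hab : Nat.Coprime a b) (hw : height a b w = 0) :
    a + b ∣ w.length := by
  rw [height_eq_mul_count_sub_mul_length, sub_eq_zero] at hw
  have hmul : (a + b) * w.count true = b * w.length := by exact_mod_cast hw
  have hcop : Nat.Coprime (a + b) b := by simpa using hab
  exact hcop.dvd_of_dvd_mul_left ⟨_, hmul.symm⟩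

theorem height_pos_of_forall_suffix_exists_prefix (hw : w ≠ [])
    (h : ∀ v, v <:+ w → v ≠ [] → ∃ p, p <+: v ∧ p ≠ [] ∧ 0 < height a b p) :
    0 < height a b w := by
  induction hn : w.length using Nat.strong_induction_on generalizing w with
  | _ n ih =>
    obtain ⟨p, ⟨t, rfl⟩, hp, hp_pos⟩ := h w List.suffix_rfl hw
    rcases eq_or_ne t [] with rfl | ht
    · simpa using hp_pos
    · have ht_lt : t.length < n := by
        have := List.length_pos_iff.2 hp
        rw [List.length_append] at hn
        omega
      have ht_pos : 0 < height a b t :=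
        ih _ ht_lt ht (fun v hv => h v (hv.trans (List.suffix_append p t))) rfl
      rw [height_append]
      exact add_pos hp_pos ht_pos

end Height

section LowerChristoffel

variable {a b : ℕ} {p q v : List Bool}

theorem length_lowerChristoffel (a b : ℕ) : (lowerChristoffel a b).length = a + b := by
  simp [lowerChristoffel]

theorem count_true_of_prefix_lowerChristoffel (hp : p <+: lowerChristoffel a b) :
    p.count true = p.length * b / (a + b) := by
  induction p using List.reverseRecOn with
  | nil => simp
  | append_singleton p c ih =>
    have hc : c = decide ((p.length + 1) * b / (a + b) ≠ p.length * b / (a + b)) := by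
      have := hp.getElem (i := p.length) (by simp)
      simpa [lowerChristoffel] using this
    rw [List.count_append, ih ((List.prefix_append p [c]).trans hp), hc, List.length_append,
      List.length_singleton]
    rcases succ_mul_div_eq_or p.length (Nat.le_add_left b a) with h | h <;> simp [h]

theorem count_true_lowerChristoffel (a b : ℕ) : (lowerChristoffel a b).count true = b := by
  rw [count_true_of_prefix_lowerChristoffel List.prefix_rfl, length_lowerChristoffel]
  rcases (a + b).eq_zero_or_pos with h | h
  · obtain ⟨rfl, rfl⟩ := Nat.add_eq_zero_iff.1 h
    rfl
  · exact Nat.mul_div_cancel_left b h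

theorem count_false_lowerChristoffel (a b : ℕ) : (lowerChristoffel a b).count false = a := by
  have hsum := List.count_false_add_count_true (lowerChristoffel a b)
  rw [count_true_lowerChristoffel, length_lowerChristoffel] at hsum
  omega

theorem height_of_prefix_lowerChristoffel (hp : p <+: lowerChristoffel a b) :
    height a b p = -(p.length * b % (a + b) : ℕ) := by
  rw [height_eq_mul_count_sub_mul_length, count_true_of_prefix_lowerChristoffel hp]
  have hdiv := Nat.div_add_mod (p.length * b) (a + b)
  zify at hdiv ⊢
  linarith

theorem height_nonpos_of_prefix_lowerChristoffel (hp : p <+: lowerChristoffel a b) :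
    height a b p ≤ 0 := by
  rw [height_of_prefix_lowerChristoffel hp]
  omega

theorem height_concat_true_pos_of_prefix_lowerChristoffel
    (hq : q ++ [false] <+: lowerChristoffel a b) : 0 < height a b (q ++ [true]) := by
  have hn : 0 < a + b := by
    have := hq.length_le
    simp only [List.length_append, List.length_singleton, length_lowerChristoffel] at this
    omega
  have hmod := Nat.mod_lt ((q ++ [false]).length * b) hn
  rw [height_concat_true, height_of_prefix_lowerChristoffel hq]
  omega

theorem height_lowerChristoffel (a b : ℕ) : height a b (lowerChristoffel a b) = 0 := by
  rw [height, count_true_lowerChristoffel, count_false_lowerChristoffel]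
  ring

theorem height_neg_of_prefix_lowerChristoffel (hab : Nat.Coprime a b)
    (hp : p <+: lowerChristoffel a b) (hp_nil : p ≠ []) (hp_ne : p ≠ lowerChristoffel a b) :
    height a b p < 0 := by
  refine lt_of_le_of_ne (height_nonpos_of_prefix_lowerChristoffel hp) fun hzero => hp_ne ?_
  refine hp.eq_of_length_le ?_
  rw [length_lowerChristoffel]
  exact Nat.le_of_dvd (List.length_pos_iff.2 hp_nil) (add_dvd_length_of_height_eq_zero hab hzero)

theorem lowerChristoffel_lt_of_eq_append (hab : Nat.Coprime a b)
    (h : lowerChristoffel a b = p ++ v) (hp : p ≠ []) (hv : v ≠ []) : lowerChristoffel a b < v := by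
  have hp_neg : height a b p < 0 :=
    height_neg_of_prefix_lowerChristoffel hab ⟨v, h.symm⟩ hp (by simpa [h] using hv)
  have hsum : height a b p + height a b v = 0 := by
    rw [← height_append, ← h, height_lowerChristoffel]
  by_contra hlt
  have hv_ne : v ≠ lowerChristoffel a b := by simpa [h] using hp
  rcases prefix_or_exists_rel_of_lex (lt_of_le_of_ne (not_lt.1 hlt) hv_ne)
    with hvw | ⟨q, c, d, hcd, hqv, hqw⟩
  · have hv_nonpos := height_nonpos_of_prefix_lowerChristoffel hvw
    omega
  · obtain ⟨rfl, rfl⟩ := Bool.lt_iff.1 hcd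
    have hpq : (p ++ q) ++ [false] <+: lowerChristoffel a b := by
      rw [h, List.append_assoc]
      exact (List.prefix_append_right_inj p).2 hqv
    have hpq_pos := height_concat_true_pos_of_prefix_lowerChristoffel hpq
    have hq_nonpos := height_nonpos_of_prefix_lowerChristoffel hqw
    rw [List.append_assoc, height_append] at hpq_pos
    omega

theorem isLyndonWord_lowerChristoffel (hab : Nat.Coprime a b) :
    IsLyndonWord (lowerChristoffel a b) := by
  refine ⟨fun hnil => ?_, isPrimitiveWord_of_coprime_count ?_,
    fun _ _ => lowerChristoffel_lt_of_eq_append hab⟩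
  · have hlen := length_lowerChristoffel a b
    obtain ⟨rfl, rfl⟩ : a = 0 ∧ b = 0 := by simpa [hnil, eq_comm] using hlen
    simp at hab
  · rwa [count_false_lowerChristoffel, count_true_lowerChristoffel]

theorem exists_prefix_height_pos_of_lowerChristoffel_lt (hv : lowerChristoffel a b < v)
    (hlen : v.length ≤ a + b) : ∃ p, p <+: v ∧ p ≠ [] ∧ 0 < height a b p := by
  rcases prefix_or_exists_rel_of_lex hv with hwv | ⟨q, c, d, hcd, hqw, hqv⟩
  · rw [← length_lowerChristoffel a b] at hlen
    exact absurd hv (hwv.eq_of_length_le hlen).not_lt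
  · obtain ⟨rfl, rfl⟩ := Bool.lt_iff.1 hcd
    exact ⟨_, hqv, by simp, height_concat_true_pos_of_prefix_lowerChristoffel hqw⟩

end LowerChristoffel

theorem IsLyndonWord.le_lowerChristoffel {u : List Bool} (hu : IsLyndonWord u) :
    u ≤ lowerChristoffel (u.count false) (u.count true) := by
  by_contra! hlt
  have hpos : 0 < height (u.count false) (u.count true) u := by
    refine height_pos_of_forall_suffix_exists_prefix hu.1 fun v hvu hv => ?_
    have hwv := hlt.trans_le (hu.le_of_suffix hvu hv)
    refine exists_prefix_height_pos_of_lowerChristoffel_lt hwv ?_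
    rw [List.count_false_add_count_true]
    exact hvu.length_le
  have hzero : height (u.count false) (u.count true) u = 0 := by
    rw [height]
    ring
  exact hpos.ne' hzero

theorem stmt5_general (a b : ℕ) :
    (Nat.Coprime a b → IsLyndonWord (lowerChristoffel a b)) ∧
    ∀ u : List Bool, IsLyndonWord u → u.count false = a → u.count true = b →
      u = lowerChristoffel a b ∨ List.Lex (· < ·) u (lowerChristoffel a b) := by
  refine ⟨isLyndonWord_lowerChristoffel, ?_⟩
  rintro u hu rfl rfl
  exact hu.le_lowerChristoffel.eq_or_lt

/-- For coprime positive `a, b`, the lower Christoffel word `w_{a,b}` is the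
lexicographically greatest Lyndon word among Lyndon words with Parikh vector `(a,b)`. -/
theorem stmt5 (a b : ℕ) (ha : 0 < a) (hb : 0 < b) (hab : Nat.Coprime a b) :
    IsLyndonWord (lowerChristoffel a b) ∧
    ∀ u : List Bool, IsLyndonWord u → u.count false = a → u.count true = b →
      u = lowerChristoffel a b ∨ List.Lex (· < ·) u (lowerChristoffel a b) := by
  obtain ⟨hlyndon, hmax⟩ := stmt5_general a b
  exact ⟨hlyndon hab, hmax⟩
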